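/- arXiv:2512.03320 — 3 statements merged into one kernel-verified Lean document; each statement's English description precedes it below -/
import Mathlib

section
/- Let (V, ω) be a symplectic space of dimension 4m + 2k over a field F with an orthogonal decomposition V = V1 ⊕ V2 where dim V1 = 2m and dim V2 = 2m + 2k, and let W ⊆ V be an isotropic subspace of dimension 2m. Set k1 = dim(W ∩ V1), k2 = dim(W ∩ V2), and let 2k3 = rank(ω|_{p1(W)}) (this rank is even). Then: (i) 0 ≤ k1 ≤ m and 0 ≤ k2 ≤ m + k and k1 + k2 ≤ 2m; (ii) 0 ≤ k2 − k1 ≤ 2k; (iii) 2k3 ≤ 2m − k1 − k2; (iv) k3 ≥ m − k2 and k3 ≥ m − k − k1. -/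
/-!
Let `p₂ = 1 - p₁` and let `R ⊆ W` consist of those `w` with `ω (p₁ w) (p₁ w') = 0` for all
`w' ∈ W`. As `W` is isotropic and the decomposition is orthogonal,
`ω (p₁ w) (p₁ w') = - ω (p₂ w) (p₂ w')` on `W`, so `R` is symmetric in the two factors. Rank-nullity
gives `dim p₁(W) = 2m - k₂` and `dim p₂(W) = 2m - k₁`; moreover `p₁(R)` is the radical of `p₁(W)`
and has dimension `dim R - k₂`, so the rank of `ω` on `p₁(W)` is `2m - dim R`. It is even by
`even_formRank`, which splits off hyperbolic planes.

All inequalities except `k₁ + k₂ ≤ 2m` and `k₁ + k₂ ≤ dim R` (both from `W ∩ V₁` and `W ∩ V₂` being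
disjoint subspaces of `R ⊆ W`) come from `finrank_add_le_of_orthogonal`: subspaces `A, B` of `Vᵢ`
with `ω (A, B) = 0` satisfy `dim A + dim B ≤ dim Vᵢ`. It is applied to the pairs
`(W ∩ Vᵢ, W ∩ Vᵢ)`, `(W ∩ Vᵢ, pᵢ(W))` and `(pᵢ(R), pᵢ(W))`.
-/

open Module

/-- The radical of the restriction of the bilinear form `ω` to the subspace `W`,
i.e. `{w ∈ W : ω w w' = 0 for all w' ∈ W}`. -/
def formRadical {F V : Type*} [Field F] [AddCommGroup V] [Module F V]
    (ω : V →ₗ[F] V →ₗ[F] F) (W : Submodule F V) : Submodule F V :=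
  W ⊓ ⨅ w ∈ W, LinearMap.ker (ω.flip w)

/-- The rank of the restriction of the bilinear form `ω` to the subspace `W`,
i.e. `dim W` minus the dimension of the radical of `ω|_W`. -/
noncomputable def formRank {F V : Type*} [Field F] [AddCommGroup V] [Module F V]
    (ω : V →ₗ[F] V →ₗ[F] F) (W : Submodule F V) : ℕ :=
  Module.finrank F W - Module.finrank F (formRadical ω W)

section Helpers

variable {F V V' : Type*} [Field F] [AddCommGroup V] [Module F V] [AddCommGroup V'] [Module F V']

theorem mem_formRadical {ω : V →ₗ[F] V →ₗ[F] F} {W : Submodule F V} {x : V} :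
    x ∈ formRadical ω W ↔ x ∈ W ∧ ∀ w ∈ W, ω x w = 0 := by
  simp [formRadical, Submodule.mem_iInf]

variable [FiniteDimensional F V]

theorem finrank_map_add_finrank_inf_ker (p : V →ₗ[F] V') (S : Submodule F V) :
    finrank F (S.map p) + finrank F (S ⊓ LinearMap.ker p : Submodule F V) = finrank F S := by
  have h := (p.domRestrict S).finrank_range_add_finrank_ker
  rwa [LinearMap.range_domRestrict, LinearMap.ker_domRestrict,
    ← Submodule.finrank_map_subtype_eq, Submodule.map_comap_subtype] at h

theorem finrank_add_le_of_disjoint {A B C : Submodule F V} (hd : Disjoint A B)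
    (hA : A ≤ C) (hB : B ≤ C) : finrank F A + finrank F B ≤ finrank F C := by
  have h := Submodule.finrank_sup_add_finrank_inf_eq A B
  rw [hd.eq_bot, finrank_bot] at h
  have := Submodule.finrank_mono (sup_le hA hB)
  omega

/-- For a nondegenerate form, `ω` embeds a subspace `A` orthogonal to `B` into the annihilator of
`B`. -/
theorem finrank_add_le_of_forall {ω : V →ₗ[F] V →ₗ[F] F}
    (hnd : ∀ x, (∀ y, ω x y = 0) → x = 0) {A B : Submodule F V}
    (h : ∀ a ∈ A, ∀ b ∈ B, ω a b = 0) : finrank F A + finrank F B ≤ finrank F V := by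
  have hinj : Function.Injective ω := by
    rw [← LinearMap.ker_eq_bot, LinearMap.ker_eq_bot']
    exact fun x hx => hnd x fun y => by rw [hx, LinearMap.zero_apply]
  have hle : A.map ω ≤ B.dualAnnihilator := by
    rintro _ ⟨a, ha, rfl⟩
    exact (Submodule.mem_dualAnnihilator _).2 (h a ha)
  have h1 := Submodule.finrank_mono hle
  rw [← (Submodule.equivMapOfInjective ω hinj A).finrank_eq] at h1
  rw [← Subspace.finrank_add_finrank_dualAnnihilator_eq B, add_comm]
  exact Nat.add_le_add_left h1 _

/-- The dimension bound for orthogonal subspaces of one factor `V₁` of an orthogonal decomposition.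
It follows from the bound in `V`, since `A` is orthogonal to `B ⊕ V₂`. -/
theorem finrank_add_le_of_orthogonal {ω : V →ₗ[F] V →ₗ[F] F}
    (hnd : ∀ x, (∀ y, ω x y = 0) → x = 0) {V1 V2 : Submodule F V} (hc : IsCompl V1 V2)
    (horth : ∀ v1 ∈ V1, ∀ v2 ∈ V2, ω v1 v2 = 0) {A B : Submodule F V} (hA : A ≤ V1) (hB : B ≤ V1)
    (h : ∀ a ∈ A, ∀ b ∈ B, ω a b = 0) : finrank F A + finrank F B ≤ finrank F V1 := by
  have h1 : finrank F A + finrank F (B ⊔ V2 : Submodule F V) ≤ finrank F V := by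
    refine finrank_add_le_of_forall hnd fun a ha b hb => ?_
    obtain ⟨b', hb', v, hv, rfl⟩ := Submodule.mem_sup.1 hb
    rw [map_add, h a ha b' hb', horth a (hA ha) v hv, add_zero]
  have h2 := finrank_add_le_of_disjoint (hc.disjoint.mono_left hB)
    (le_sup_left : B ≤ B ⊔ V2) le_sup_right
  have h3 := Submodule.finrank_add_eq_of_isCompl hc
  omega

/-- The rank of an alternating form is even: if `ω e f = 1` with `e, f ∈ U`, passing from `U` to
`U ∩ ⟨e, f⟩^⊥` keeps the radical and lowers the dimension by two. -/
theorem even_formRank {ω : V →ₗ[F] V →ₗ[F] F} (halt : ∀ x, ω x x = 0) (U : Submodule F V) :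
    Even (formRank ω U) := by
  have hskew : ∀ x y, ω x y = - ω y x := fun x y => by
    have := halt (x + y)
    simp only [map_add, LinearMap.add_apply, halt] at this
    linear_combination this
  induction hn : finrank F U using Nat.strong_induction_on generalizing U with
  | _ n ih =>
  by_cases h0 : ∀ x ∈ U, ∀ y ∈ U, ω x y = 0
  · have : formRadical ω U = U := by
      ext x
      rw [mem_formRadical]
      exact ⟨fun h => h.1, fun h => ⟨h, h0 x h⟩⟩
    rw [formRank, this, Nat.sub_self]
    exact Even.zero
  push Not at h0
  obtain ⟨e, he, f₀, hf₀, hne⟩ := h0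
  obtain ⟨f, hf, hef⟩ : ∃ f ∈ U, ω e f = 1 :=
    ⟨(ω e f₀)⁻¹ • f₀, U.smul_mem _ hf₀, by simp [hne]⟩
  have hfe : ω f e = -1 := by rw [hskew, hef]
  set g : V →ₗ[F] F × F := (ω e).prod (ω f) with hg
  have hmem : ∀ x, x ∈ U ⊓ LinearMap.ker g ↔ x ∈ U ∧ ω e x = 0 ∧ ω f x = 0 := fun x => by
    simp [hg]
  have htop : U.map g = ⊤ := by
    rw [eq_top_iff]
    rintro ⟨a, b⟩ -
    refine ⟨a • f - b • e, U.sub_mem (U.smul_mem _ hf) (U.smul_mem _ he), ?_⟩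
    simp [hg, halt, hef, hfe]
  have hdim := finrank_map_add_finrank_inf_ker g U
  rw [htop, finrank_top, Module.finrank_prod, Module.finrank_self] at hdim
  have hrad : formRadical ω (U ⊓ LinearMap.ker g) = formRadical ω U := by
    ext x
    rw [mem_formRadical, mem_formRadical, hmem]
    constructor
    · rintro ⟨⟨hx, hex, hfx⟩, h⟩
      refine ⟨hx, fun w hw => ?_⟩
      -- the projection of `w` to the orthogonal complement of the plane spanned by `e` and `f`
      have := h (w - ω e w • f + ω f w • e) ((hmem _).2
        ⟨U.add_mem (U.sub_mem hw (U.smul_mem _ hf)) (U.smul_mem _ he),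
          by simp [halt, hef], by simp [halt, hfe]⟩)
      simpa [hskew x f, hskew x e, hex, hfx] using this
    · rintro ⟨hx, h⟩
      exact ⟨⟨hx, by rw [hskew, h e he, neg_zero], by rw [hskew, h f hf, neg_zero]⟩,
        fun w hw => h w ((hmem w).1 hw).1⟩
  have hev := ih _ (by omega) (U ⊓ LinearMap.ker g) rfl
  have hle : formRadical ω U ≤ U ⊓ LinearMap.ker g := by
    rw [← hrad]
    exact inf_le_left
  have hle := Submodule.finrank_mono hle
  unfold formRank at hev ⊢
  rw [hrad] at hev
  have : finrank F U - finrank F (formRadical ω U) =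
      finrank F (U ⊓ LinearMap.ker g : Submodule F V) - finrank F (formRadical ω U) + 2 := by
    omega
  rw [this]
  exact hev.add even_two

end Helpers

/-- Invariants of a `2m`-dimensional isotropic subspace of a symplectic space
of dimension `4m + 2k` with orthogonal decomposition `V = V1 ⊕ V2`, `dim V1 = 2m`,
`dim V2 = 2m + 2k`: writing `k1 = dim (W ⊓ V1)`, `k2 = dim (W ⊓ V2)`, the rank of `ω|_{p1 W}`
is even, say `2 k3`, and `(k1, k2, k3)` satisfy the listed inequalities
(with `0 ≤ k2 - k1 ≤ 2k`, `2k3 ≤ 2m - k1 - k2`, `k3 ≥ m - k2`, `k3 ≥ m - k - k1` written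
additively). -/
theorem isotropic_invariants_inequalities
    {F V : Type*} [Field F] [AddCommGroup V] [Module F V] [FiniteDimensional F V]
    (m k : ℕ)
    (ω : V →ₗ[F] V →ₗ[F] F)
    (halt : ∀ x, ω x x = 0)
    (hnd : ∀ x, (∀ y, ω x y = 0) → x = 0)
    (hdim : finrank F V = 4 * m + 2 * k)
    (V1 V2 : Submodule F V) (hcompl : IsCompl V1 V2)
    (horth : ∀ v1 ∈ V1, ∀ v2 ∈ V2, ω v1 v2 = 0)
    (hV1 : finrank F V1 = 2 * m) (hV2 : finrank F V2 = 2 * m + 2 * k)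
    (p1 : V →ₗ[F] V) (hp1 : ∀ v1 ∈ V1, ∀ v2 ∈ V2, p1 (v1 + v2) = v1)
    (W : Submodule F V)
    (hW : ∀ w ∈ W, ∀ w' ∈ W, ω w w' = 0)
    (hWdim : finrank F W = 2 * m)
    (k1 k2 : ℕ)
    (hk1 : finrank F (W ⊓ V1 : Submodule F V) = k1)
    (hk2 : finrank F (W ⊓ V2 : Submodule F V) = k2) :
    k1 ≤ m ∧ k2 ≤ m + k ∧ k1 + k2 ≤ 2 * m ∧
      k1 ≤ k2 ∧ k2 ≤ k1 + 2 * k ∧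
      ∃ k3 : ℕ, formRank ω (Submodule.map p1 W) = 2 * k3 ∧
        k1 + k2 + 2 * k3 ≤ 2 * m ∧ m ≤ k2 + k3 ∧ m ≤ k + k1 + k3 := by
  have hskew : ∀ x y, ω x y = - ω y x := fun x y => by
    have := halt (x + y)
    simp only [map_add, LinearMap.add_apply, halt] at this
    linear_combination this
  have horth' : ∀ v2 ∈ V2, ∀ v1 ∈ V1, ω v2 v1 = 0 := fun v2 h2 v1 h1 => by
    rw [hskew, horth v1 h1 v2 h2, neg_zero]
  set p2 : V →ₗ[F] V := LinearMap.id - p1 with hp2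
  have hsum : ∀ x, p1 x + p2 x = x := fun x => by simp [hp2]
  have hmem : ∀ x, p1 x ∈ V1 ∧ p2 x ∈ V2 := fun x => by
    obtain ⟨a, ha, b, hb, rfl⟩ := Submodule.mem_sup.1
      (hcompl.sup_eq_top ▸ Submodule.mem_top : x ∈ V1 ⊔ V2)
    simp [hp2, hp1 a ha b hb, ha, hb]
  have hp1V1 : ∀ x ∈ V1, p1 x = x := fun x hx => by simpa using hp1 x hx 0 V2.zero_mem
  have hp1V2 : ∀ x ∈ V2, p1 x = 0 := fun x hx => by simpa using hp1 0 V1.zero_mem x hx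
  have hker1 : LinearMap.ker p1 = V2 := by
    ext x
    refine ⟨fun h => ?_, hp1V2 x⟩
    rw [← hsum x, LinearMap.mem_ker.1 h, zero_add]
    exact (hmem x).2
  have hker2 : LinearMap.ker p2 = V1 := by
    ext x
    refine ⟨fun h => ?_, fun h => by simp [hp2, hp1V1 x h]⟩
    rw [← hsum x, LinearMap.mem_ker.1 h, add_zero]
    exact (hmem x).1
  have hsplit : ∀ x y, ω x y = ω (p1 x) (p1 y) + ω (p2 x) (p2 y) := fun x y => by
    conv_lhs => rw [← hsum x, ← hsum y]
    simp only [map_add, LinearMap.add_apply]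
    rw [horth _ (hmem x).1 _ (hmem y).2, horth' _ (hmem x).2 _ (hmem y).1]
    ring
  set R : Submodule F V := W ⊓ (formRadical ω (W.map p1)).comap p1 with hR
  have hRmem : ∀ x, x ∈ R ↔ x ∈ W ∧ ∀ w ∈ W, ω (p1 x) (p1 w) = 0 := fun x => by
    simp only [hR, Submodule.mem_inf, Submodule.mem_comap, mem_formRadical]
    constructor
    · exact fun ⟨h, _, h'⟩ => ⟨h, fun w hw => h' _ (Submodule.mem_map_of_mem hw)⟩
    · rintro ⟨h, h'⟩
      refine ⟨h, Submodule.mem_map_of_mem h, ?_⟩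
      rintro _ ⟨w, hw, rfl⟩
      exact h' w hw
  have hRW : R ≤ W := inf_le_left
  -- hence `dim R - k₂` is the dimension of the radical of `p₁(W)`
  have hRmap : R.map p1 = formRadical ω (W.map p1) := by
    ext x
    constructor
    · rintro ⟨w, hw, rfl⟩
      exact hw.2
    · intro hx
      obtain ⟨w, hw, rfl⟩ := (mem_formRadical.1 hx).1
      exact ⟨w, ⟨hw, hx⟩, rfl⟩
  -- for `x ∈ W ∩ V₁`, the form `ω (p₁ x) (p₁ w)` is `ω x w`, which vanishes on `W`
  have hR1 : W ⊓ V1 ≤ R := fun x hx => (hRmem x).2 ⟨hx.1, fun w hw => by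
    have h := hsplit x w
    rw [hW x hx.1 w hw, LinearMap.mem_ker.1 (hker2 ▸ hx.2 : x ∈ LinearMap.ker p2)] at h
    simpa using h.symm⟩
  have hR2 : W ⊓ V2 ≤ R := fun x hx => (hRmem x).2 ⟨hx.1, fun w hw => by simp [hp1V2 x hx.2]⟩
  have hRinf1 : R ⊓ V1 = W ⊓ V1 :=
    le_antisymm (inf_le_inf_right _ hRW) (le_inf hR1 inf_le_right)
  have hRinf2 : R ⊓ V2 = W ⊓ V2 :=
    le_antisymm (inf_le_inf_right _ hRW) (le_inf hR2 inf_le_right)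
  have dW1 := finrank_map_add_finrank_inf_ker p1 W
  have dW2 := finrank_map_add_finrank_inf_ker p2 W
  have dR1 := finrank_map_add_finrank_inf_ker p1 R
  have dR2 := finrank_map_add_finrank_inf_ker p2 R
  rw [hker1, hk2, hWdim] at dW1
  rw [hker2, hk1, hWdim] at dW2
  rw [hker1, hRinf2, hk2] at dR1
  rw [hker2, hRinf1, hk1] at dR2
  have dRW := Submodule.finrank_mono hRW
  have hdisj := finrank_add_le_of_disjoint
    (hcompl.disjoint.mono (inf_le_right : W ⊓ V1 ≤ V1) (inf_le_right : W ⊓ V2 ≤ V2)) hR1 hR2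
  have hm1 : ∀ S : Submodule F V, S.map p1 ≤ V1 := fun S => by
    rintro _ ⟨x, -, rfl⟩
    exact (hmem x).1
  have hm2 : ∀ S : Submodule F V, S.map p2 ≤ V2 := fun S => by
    rintro _ ⟨x, -, rfl⟩
    exact (hmem x).2
  have ho1 : ∀ a ∈ R.map p1, ∀ b ∈ W.map p1, ω a b = 0 := by
    rintro _ ⟨x, hx, rfl⟩ _ ⟨w, hw, rfl⟩
    exact ((hRmem x).1 hx).2 w hw
  -- on the isotropic `W` the two pulled-back forms differ by a sign, so `R` also works for `p₂`
  have ho2 : ∀ a ∈ R.map p2, ∀ b ∈ W.map p2, ω a b = 0 := by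
    rintro _ ⟨x, hx, rfl⟩ _ ⟨w, hw, rfl⟩
    have h := hsplit x w
    rw [hW x (hRW hx) w hw, ((hRmem x).1 hx).2 w hw, zero_add] at h
    exact h.symm
  have hi1 : W ⊓ V1 ≤ R.map p1 := fun x hx => ⟨x, hR1 hx, hp1V1 x hx.2⟩
  have hi2 : W ⊓ V2 ≤ R.map p2 := fun x hx => ⟨x, hR2 hx, by simp [hp2, hp1V2 x hx.2]⟩
  have i1 := finrank_add_le_of_orthogonal hnd hcompl horth (inf_le_right : W ⊓ V1 ≤ V1)
    (inf_le_right : W ⊓ V1 ≤ V1) fun a ha b hb => hW a ha.1 b hb.1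
  have i2 := finrank_add_le_of_orthogonal hnd hcompl.symm horth' (inf_le_right : W ⊓ V2 ≤ V2)
    (inf_le_right : W ⊓ V2 ≤ V2) fun a ha b hb => hW a ha.1 b hb.1
  have i3 := finrank_add_le_of_orthogonal hnd hcompl horth inf_le_right (hm1 W)
    fun a ha b hb => ho1 a (hi1 ha) b hb
  have i4 := finrank_add_le_of_orthogonal hnd hcompl.symm horth' inf_le_right (hm2 W)
    fun a ha b hb => ho2 a (hi2 ha) b hb
  have i5 := finrank_add_le_of_orthogonal hnd hcompl horth (hm1 R) (hm1 W) ho1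
  have i6 := finrank_add_le_of_orthogonal hnd hcompl.symm horth' (hm2 R) (hm2 W) ho2
  obtain ⟨k3, hk3⟩ := even_formRank halt (W.map p1)
  have hrank : formRank ω (W.map p1) = finrank F (W.map p1) - finrank F (R.map p1) := by
    rw [hRmap, formRank]
  refine ⟨by omega, by omega, by omega, by omega, by omega, k3, by omega, by omega, by omega,
    by omega⟩
end

section
/- Let (V, ω) be a symplectic space of dimension 4m over a field F with an orthogonal decomposition V = V1 ⊕ V2 where dim V1 = dim V2 = 2m, and let W ⊆ V be an isotropic subspace of dimension 2m. Then dim(W ∩ V1) = dim(W ∩ V2), and rank(ω|_{p1(W)}) = 2(m − dim(W ∩ V1)). -/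
/-!
An isotropic subspace `W` of half the dimension is Lagrangian: `W` is its own orthogonal. Put
`P = p1 W`, `A = W ⊓ V1`, `B = W ⊓ V2`. If `x ∈ V1` and `w ∈ W`, then `ω (p1 w) x = ω w x`, so the
part of `P^⊥` lying in `V1` is `W^⊥ ⊓ V1 = A`. Since `A ≤ P ≤ V1`, the radical of `ω|_P` is `A`, and
since `V2 ≤ P^⊥`, also `P^⊥ = V2 ⊕ A`. Counting dimensions, with `dim P = 2m - dim B` because
`p1` has kernel `V2`, the second equality gives `dim A = dim B`, and then
`rank ω|_P = dim P - dim A = 2m - 2 dim A`.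
-/

open Module

/-- For `V` of dimension `4m` with orthogonal decomposition `V = V1 ⊕ V2`,
`dim V1 = dim V2 = 2m`, and `W ⊆ V` isotropic of dimension `2m`, we have
`dim (W ⊓ V1) = dim (W ⊓ V2)` and `rank ω|_{p1 W} = 2 (m - dim (W ⊓ V1))`. -/
theorem isotropic_invariants_equal_case
    {F V : Type*} [Field F] [AddCommGroup V] [Module F V] [FiniteDimensional F V]
    (m : ℕ) (hm : 0 < m)
    (ω : V →ₗ[F] V →ₗ[F] F)
    (halt : ∀ x, ω x x = 0)
    (hnd : ∀ x, (∀ y, ω x y = 0) → x = 0)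
    (hdim : finrank F V = 4 * m)
    (V1 V2 : Submodule F V) (hcompl : IsCompl V1 V2)
    (horth : ∀ v1 ∈ V1, ∀ v2 ∈ V2, ω v1 v2 = 0)
    (hV1 : finrank F V1 = 2 * m) (hV2 : finrank F V2 = 2 * m)
    (p1 : V →ₗ[F] V) (hp1 : ∀ v1 ∈ V1, ∀ v2 ∈ V2, p1 (v1 + v2) = v1)
    (W : Submodule F V)
    (hW : ∀ w ∈ W, ∀ w' ∈ W, ω w w' = 0)
    (hWdim : finrank F W = 2 * m) :
    finrank F (W ⊓ V1 : Submodule F V) = finrank F (W ⊓ V2 : Submodule F V) ∧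
      formRank ω (Submodule.map p1 W) =
        2 * (m - finrank F (W ⊓ V1 : Submodule F V)) := by
  have hsplit : ∀ v : V, ∃ a ∈ V1, ∃ b ∈ V2, a + b = v := fun v =>
    Submodule.mem_sup.1 (hcompl.sup_eq_top ▸ Submodule.mem_top)
  have hanti : ∀ x y, ω x y = 0 → ω y x = 0 := fun x y h => by
    have h' := halt (x + y)
    simpa [halt, h] using h'
  have hrefl : LinearMap.BilinForm.IsRefl ω := hanti
  have hN : LinearMap.BilinForm.Nondegenerate ω :=
    ⟨hnd, fun y h => hnd y fun x => hanti x y (h x)⟩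
  have hp1id : ∀ x ∈ V1, p1 x = x := fun x hx => by
    simpa using hp1 x hx 0 V2.zero_mem
  have hp1mem : ∀ v, p1 v ∈ V1 := fun v => by
    obtain ⟨a, ha, b, hb, rfl⟩ := hsplit v
    rwa [hp1 a ha b hb]
  have hωp1 : ∀ v, ∀ x ∈ V1, ω (p1 v) x = ω v x := fun v x hx => by
    obtain ⟨a, ha, b, hb, rfl⟩ := hsplit v
    rw [hp1 a ha b hb, map_add, LinearMap.add_apply, hanti x b (horth x hx b hb), add_zero]
  have hker : LinearMap.ker p1 = V2 := by
    ext v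
    rw [LinearMap.mem_ker]
    constructor
    · intro h
      obtain ⟨a, ha, b, hb, rfl⟩ := hsplit v
      rw [hp1 a ha b hb] at h
      simpa [h] using hb
    · intro h
      simpa using hp1 0 V1.zero_mem v h
  -- `W` is contained in its orthogonal, and both have dimension `2m`.
  have hLag : LinearMap.BilinForm.orthogonal ω W = W := by
    refine (Submodule.eq_of_le_of_finrank_eq (S₁ := W)
      (S₂ := LinearMap.BilinForm.orthogonal ω W) (fun w hw n hn => hW n hn w hw) ?_).symm
    rw [LinearMap.BilinForm.finrank_orthogonal hN]
    omega
  have hLag' : ∀ x, (∀ w ∈ W, ω w x = 0) → x ∈ W := fun x h => by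
    rw [← hLag]; exact h
  have hA : ∀ x ∈ V1, (∀ w ∈ W, ω (p1 w) x = 0) → x ∈ W := fun x hx h =>
    hLag' x fun w hw => by rw [← hωp1 w x hx]; exact h w hw
  have hrad : formRadical ω (W.map p1) = W ⊓ V1 := by
    ext x
    simp only [formRadical, Submodule.mem_inf, Submodule.mem_iInf, LinearMap.mem_ker,
      LinearMap.flip_apply]
    constructor
    · rintro ⟨⟨v, -, rfl⟩, h⟩
      exact ⟨hA _ (hp1mem v) fun w hw => hanti _ _ (h _ (Submodule.mem_map_of_mem hw)), hp1mem v⟩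
    · rintro ⟨hxW, hx1⟩
      refine ⟨⟨x, hxW, hp1id x hx1⟩, ?_⟩
      rintro _ ⟨w, hw, rfl⟩
      apply hanti
      rw [hωp1 w x hx1]
      exact hW w hw x hxW
  have hperp : LinearMap.BilinForm.orthogonal ω (W.map p1) = V2 ⊔ (W ⊓ V1) := by
    apply le_antisymm
    · intro x hx
      obtain ⟨a, ha, b, hb, rfl⟩ := hsplit x
      rw [add_comm]
      refine Submodule.add_mem_sup hb ⟨hA a ha fun w hw => ?_, ha⟩
      have h : ω (p1 w) (a + b) = 0 := hx _ (Submodule.mem_map_of_mem hw)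
      rwa [map_add, horth _ (hp1mem w) b hb, add_zero] at h
    · refine sup_le (fun b hb => ?_) (fun a ha => ?_)
      · rintro _ ⟨w, -, rfl⟩
        exact horth _ (hp1mem w) b hb
      · rintro _ ⟨w, hw, rfl⟩
        change ω (p1 w) a = 0
        rw [hωp1 w a ha.2]
        exact hW w hw a ha.1
  have hP : finrank F (W.map p1) + finrank F (W ⊓ V2 : Submodule F V) = 2 * m := by
    have h := LinearMap.finrank_range_add_finrank_ker (p1.domRestrict W)
    rw [LinearMap.range_domRestrict, LinearMap.ker_domRestrict, hker, hWdim] at h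
    rw [← h, ← Submodule.map_comap_subtype, Submodule.finrank_map_subtype_eq]
  have hsup : finrank F (V2 ⊔ (W ⊓ V1) : Submodule F V)
      = 2 * m + finrank F (W ⊓ V1 : Submodule F V) := by
    have h := Submodule.finrank_sup_add_finrank_inf_eq V2 (W ⊓ V1)
    have hbot : V2 ⊓ (W ⊓ V1) = ⊥ :=
      (hcompl.symm.disjoint.mono_right inf_le_right).eq_bot
    rwa [hbot, finrank_bot, add_zero, hV2] at h
  have hcount := LinearMap.BilinForm.finrank_orthogonal hN (W.map p1)
  rw [hperp, hsup, hdim] at hcount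
  rw [formRank, hrad]
  omega
end

section
/- Let V be a finite-dimensional vector space over a field F equipped with a symmetric bilinear form b, and suppose V = V1 ⊕ V2 is an internal direct sum with b(v1, v2) = 0 for all v1 ∈ V1, v2 ∈ V2. If W ⊆ V is a subspace with b(w, w') = 0 for all w, w' ∈ W (totally isotropic for b), then the restrictions of b to the projections p1(W) and p2(W) have equal rank: rank(b|_{p1(W)}) = rank(b|_{p2(W)}). -/
/-!
For `w, w' ∈ W` isotropy and `b(V1, V2) = 0` give `b (p1 w) (p1 w') = - b (p2 w) (p2 w')`, so the
two forms obtained by pulling `b` back to `W` along `p1` and `p2` are negatives of each other and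
have the same radical. The rank of a form restricted to `p(W)` equals the rank of its pullback to
`W` (`formRank_map`), hence the two ranks agree.
-/

open Module

/-- The radical of the form `(w, w') ↦ b (p w) (p w')` on `W`, realised as the part of `W` that `p`
sends into the radical of `b` restricted to `p(W)`. -/
def pullbackRadical {F V : Type*} [Field F] [AddCommGroup V] [Module F V]
    (b : V →ₗ[F] V →ₗ[F] F) (p : V →ₗ[F] V) (W : Submodule F V) : Submodule F V :=
  W ⊓ (formRadical b (W.map p)).comap p

theorem mem_pullbackRadical {F V : Type*} [Field F] [AddCommGroup V] [Module F V]
    (b : V →ₗ[F] V →ₗ[F] F) (p : V →ₗ[F] V) (W : Submodule F V) (w : V) :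
    w ∈ pullbackRadical b p W ↔ w ∈ W ∧ ∀ w' ∈ W, b (p w) (p w') = 0 := by
  simp only [pullbackRadical, formRadical, Submodule.mem_inf, Submodule.mem_comap,
    Submodule.mem_iInf, LinearMap.mem_ker, LinearMap.flip_apply]
  constructor
  · rintro ⟨hw, -, h⟩
    exact ⟨hw, fun w' hw' => h _ (Submodule.mem_map_of_mem hw')⟩
  · rintro ⟨hw, h⟩
    refine ⟨hw, Submodule.mem_map_of_mem hw, ?_⟩
    rintro _ ⟨w', hw', rfl⟩
    exact h w' hw'

/-- Rank–nullity for a linear map restricted to a subspace. -/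
theorem finrank_map_add_finrank_inf_ker_s10 {F V : Type*} [Field F] [AddCommGroup V] [Module F V]
    [FiniteDimensional F V] (p : V →ₗ[F] V) (U : Submodule F V) :
    finrank F (U.map p) + finrank F (U ⊓ LinearMap.ker p : Submodule F V) = finrank F U := by
  rw [← LinearMap.finrank_range_add_finrank_ker (p.domRestrict U), LinearMap.range_domRestrict,
    LinearMap.ker_domRestrict, ← Submodule.map_comap_subtype,
    Submodule.finrank_map_subtype_eq]

/-- The rank of `b` on `p(W)` is the rank of the pullback of `b` to `W` along `p`: passing from `W`
to `p(W)` lowers the dimensions of the space and of the radical by the same amount, since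
`W ∩ ker p` lies in the radical of the pullback. -/
theorem formRank_map {F V : Type*} [Field F] [AddCommGroup V] [Module F V]
    [FiniteDimensional F V] (b : V →ₗ[F] V →ₗ[F] F) (p : V →ₗ[F] V) (W : Submodule F V) :
    formRank b (W.map p) = finrank F W - finrank F (pullbackRadical b p W) := by
  have hmap : (pullbackRadical b p W).map p = formRadical b (W.map p) := by
    refine le_antisymm (Submodule.map_le_iff_le_comap.mpr inf_le_right) fun x hx => ?_
    obtain ⟨w, hw, rfl⟩ := hx.1
    exact Submodule.mem_map_of_mem ⟨hw, hx⟩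
  have hker : pullbackRadical b p W ⊓ LinearMap.ker p = W ⊓ LinearMap.ker p := by
    rw [pullbackRadical, inf_assoc,
      inf_eq_right.mpr (LinearMap.ker_le_comap p)]
  have h1 := finrank_map_add_finrank_inf_ker_s10 p W
  have h2 := finrank_map_add_finrank_inf_ker_s10 p (pullbackRadical b p W)
  rw [hmap, hker] at h2
  rw [formRank]
  omega

/-- For a symmetric bilinear form `b` on `V = V1 ⊕ V2` with
`b(V1, V2) = 0`, and `W ⊆ V` totally isotropic for `b`, the restrictions of `b` to the
projections `p1(W)` and `p2(W)` have equal rank. -/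
theorem isotropic_projection_ranks_equal_symmetric
    {F V : Type*} [Field F] [AddCommGroup V] [Module F V] [FiniteDimensional F V]
    (b : V →ₗ[F] V →ₗ[F] F)
    (hsymm : ∀ x y, b x y = b y x)
    (V1 V2 : Submodule F V) (hcompl : IsCompl V1 V2)
    (horth : ∀ v1 ∈ V1, ∀ v2 ∈ V2, b v1 v2 = 0)
    (p1 p2 : V →ₗ[F] V)
    (hp1 : ∀ v1 ∈ V1, ∀ v2 ∈ V2, p1 (v1 + v2) = v1)
    (hp2 : ∀ v1 ∈ V1, ∀ v2 ∈ V2, p2 (v1 + v2) = v2)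
    (W : Submodule F V)
    (hW : ∀ w ∈ W, ∀ w' ∈ W, b w w' = 0) :
    formRank b (Submodule.map p1 W) = formRank b (Submodule.map p2 W) := by
  have key : ∀ w ∈ W, ∀ w' ∈ W, b (p1 w) (p1 w') + b (p2 w) (p2 w') = 0 := by
    intro w hw w' hw'
    obtain ⟨x, hx, y, hy, rfl⟩ :=
      Submodule.mem_sup.mp (hcompl.sup_eq_top ▸ Submodule.mem_top : w ∈ V1 ⊔ V2)
    obtain ⟨x', hx', y', hy', rfl⟩ :=
      Submodule.mem_sup.mp (hcompl.sup_eq_top ▸ Submodule.mem_top : w' ∈ V1 ⊔ V2)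
    rw [hp1 x hx y hy, hp1 x' hx' y' hy', hp2 x hx y hy, hp2 x' hx' y' hy']
    simpa [horth x hx y' hy', hsymm y x', horth x' hx' y hy] using hW _ hw _ hw'
  have hrad : pullbackRadical b p1 W = pullbackRadical b p2 W := by
    ext w
    simp only [mem_pullbackRadical]
    refine and_congr_right fun hw => forall₂_congr fun w' hw' => ?_
    rw [eq_neg_of_add_eq_zero_left (key w hw w' hw'), neg_eq_zero]
  rw [formRank_map, formRank_map, hrad]
end
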